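/- arXiv:1609.07121 — 10 statements merged into one kernel-verified Lean document; each statement's English description precedes it below -/
import Mathlib

section
/- Fix b > 0 and an integer j ≥ 1. Then there exist constants K > 0 and c₋, c₊ > 0 such that for every k ≥ K one has c₋ k^{2j−3} e^{−k²/b} ≤ ∫_{−∞}^0 ψ_{j,∞}(x;k)² dx ≤ c₊ k^{2j−3} e^{−k²/b}. -/
open MeasureTheory Real Set

/-- Physicists' Hermite polynomial via the Rodrigues formula
`H_q(x) = (-1)^q e^{x²} (d^q/dx^q) e^{-x²}`. -/
noncomputable def hermiteP (q : ℕ) (x : ℝ) : ℝ :=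
  (-1 : ℝ) ^ q * Real.exp (x ^ 2) * iteratedDeriv q (fun t => Real.exp (-t ^ 2)) x

/-- The normalized Hermite function
`φ_j(x) = (√π (j-1)! 2^(j-1))^{-1/2} H_{j-1}(x) e^{-x²/2}` for `j ≥ 1`. -/
noncomputable def phiF (j : ℕ) (x : ℝ) : ℝ :=
  (Real.sqrt (Real.sqrt Real.pi * (Nat.factorial (j - 1)) * 2 ^ (j - 1)))⁻¹ *
    hermiteP (j - 1) x * Real.exp (-x ^ 2 / 2)

/-- `ψ_{j,∞}(x;k) = b^{1/4} φ_j(b^{1/2} x - b^{-1/2} k)`. -/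
noncomputable def psiInf (b : ℝ) (j : ℕ) (x k : ℝ) : ℝ :=
  b ^ ((1 : ℝ) / 4) * phiF j (Real.sqrt b * x - k / Real.sqrt b)


lemma aux_poly (n : ℕ) : ∃ P : Polynomial ℝ, P.degree = n ∧
    ∀ x : ℝ, iteratedDeriv n (fun t => Real.exp (-t ^ 2)) x = P.eval x * Real.exp (-x ^ 2) := by
  induction n with
  | zero => exact ⟨1, by simp, by simp⟩
  | succ n ih =>
    obtain ⟨P, hP, h⟩ := ih
    have hP0 : P ≠ 0 := by
      rintro rfl
      simp at hP
    refine ⟨Polynomial.derivative P + Polynomial.C (-2) * Polynomial.X * P, ?_, ?_⟩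
    · have h1 : (Polynomial.C (-2 : ℝ) * Polynomial.X * P).degree = ((n + 1 : ℕ) : WithBot ℕ) := by
        rw [Polynomial.degree_mul, Polynomial.degree_C_mul_X (by norm_num), hP]
        push_cast
        rw [add_comm]
      rw [Polynomial.degree_add_eq_right_of_degree_lt, h1]
      rw [h1]
      refine (Polynomial.degree_derivative_lt hP0).trans ?_
      rw [hP]
      exact_mod_cast Nat.lt_succ_self n
    · intro x
      rw [iteratedDeriv_succ, funext h]
      have h1 : HasDerivAt (fun x : ℝ => Real.exp (-x ^ 2)) (Real.exp (-x ^ 2) * (-(2 * x))) x := by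
        have := ((hasDerivAt_pow 2 x).neg).exp
        simpa using this
      have h2 := (P.hasDerivAt x).mul h1
      have h3 := h2.deriv
      refine h3.trans ?_
      simp
      ring

lemma aux_bounds (q : ℕ) : ∃ P : Polynomial ℝ, (∀ x, hermiteP q x = P.eval x) ∧
    ∃ a > (0 : ℝ), ∃ A > (0 : ℝ), ∃ R > (0 : ℝ), ∀ x ≤ -R,
      a * |x| ^ q ≤ |P.eval x| ∧ |P.eval x| ≤ A * |x| ^ q := by
  obtain ⟨P, hP, h⟩ := aux_poly q
  have hl : P.leadingCoeff ≠ 0 := by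
    rw [Polynomial.leadingCoeff_ne_zero]
    rintro rfl
    simp at hP
  have hnd : P.natDegree = q := Polynomial.natDegree_eq_of_degree_eq_some hP
  refine ⟨Polynomial.C ((-1) ^ q) * P, ?_, ?_⟩
  · intro x
    have : Real.exp (x ^ 2) * Real.exp (-x ^ 2) = 1 := by
      rw [← Real.exp_add]; simp
    simp only [hermiteP, h, Polynomial.eval_mul, Polynomial.eval_C]
    linear_combination (-1) ^ q * P.eval x * this
  · have he : ∀ x, |(Polynomial.C ((-1) ^ q) * P).eval x| = |P.eval x| := by
      intro x; simp [abs_mul]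
    simp only [he]
    have hT := (Polynomial.isEquivalent_atBot_lead P).isTheta
    rw [hnd] at hT
    obtain ⟨A, hA, h1⟩ := hT.1.exists_pos
    obtain ⟨B, hB, h2⟩ := hT.2.exists_pos
    have h1 := h1.bound
    have h2 := h2.bound
    obtain ⟨N, hN⟩ := Filter.eventually_atBot.1 (h1.and h2)
    have hl' : 0 < |P.leadingCoeff| := abs_pos.2 hl
    refine ⟨|P.leadingCoeff| / B, by positivity, A * |P.leadingCoeff|, by positivity, |N| + 1,
      by positivity, ?_⟩
    intro x hx
    obtain ⟨h3, h4⟩ := hN x (by have := neg_abs_le N; linarith)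
    simp only [Real.norm_eq_abs, abs_mul, abs_pow] at h3 h4
    refine ⟨?_, by linarith⟩
    rw [div_mul_eq_mul_div, div_le_iff₀ hB]
    linarith

lemma aux_int (F : ℝ → ℝ) (hF : Continuous F) (k m M : ℝ) (hk : 0 < k)
    (h0 : ∀ x, 0 ≤ F x) (hlow : ∀ x < 0, -(1 / k) < x → m ≤ F x)
    (hup : ∀ x < 0, F x ≤ M * Real.exp (k * x)) :
    m / k ≤ ∫ x in Set.Iio (0 : ℝ), F x ∧ ∫ x in Set.Iio (0 : ℝ), F x ≤ M / k := by
  have hE : IntegrableOn (fun x => M * Real.exp (k * x)) (Set.Iio 0) :=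
    ((integrableOn_exp_mul_Iic hk 0).mono_set Set.Iio_subset_Iic_self).const_mul M
  have hI : IntegrableOn F (Set.Iio 0) := by
    refine Integrable.mono' hE hF.aestronglyMeasurable ?_
    refine (ae_restrict_iff' measurableSet_Iio).2 (Filter.Eventually.of_forall fun x hx => ?_)
    rw [Real.norm_of_nonneg (h0 x)]
    exact hup x hx
  constructor
  · calc m / k = ∫ x in Set.Ioo (-(1 / k)) 0, m := by
          have : 0 < 1 / k := by positivity
          simp [Real.volume_real_Ioo_of_le, hk.le]
          ring
      _ ≤ ∫ x in Set.Ioo (-(1 / k)) 0, F x := by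
          refine setIntegral_mono_on (by simp) (hI.mono_set Set.Ioo_subset_Iio_self)
            measurableSet_Ioo fun x hx => hlow x hx.2 hx.1
      _ ≤ _ := setIntegral_mono_set hI (Filter.Eventually.of_forall h0)
            (Filter.Eventually.of_forall Set.Ioo_subset_Iio_self)
  · calc ∫ x in Set.Iio (0 : ℝ), F x ≤ ∫ x in Set.Iio (0 : ℝ), M * Real.exp (k * x) :=
          setIntegral_mono_on hI hE measurableSet_Iio fun x hx => hup x hx
      _ = M / k := by
          rw [← integral_Iic_eq_integral_Iio, integral_const_mul, integral_exp_mul_Iic hk]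
          simp
          ring

/-- Fix `b > 0` and an integer `j ≥ 1`. Then there exist constants `K > 0` and
`c₋, c₊ > 0` such that for every `k ≥ K` one has
`c₋ k^{2j-3} e^{-k²/b} ≤ ∫_{-∞}^0 ψ_{j,∞}(x;k)² dx ≤ c₊ k^{2j-3} e^{-k²/b}`. -/
theorem stmt3 (b : ℝ) (hb : 0 < b) (j : ℕ) (hj : 1 ≤ j) :
    ∃ K > (0 : ℝ), ∃ cm > (0 : ℝ), ∃ cp > (0 : ℝ), ∀ k : ℝ, K ≤ k →
      cm * k ^ (2 * (j : ℝ) - 3) * Real.exp (-k ^ 2 / b)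
          ≤ ∫ x in Set.Iio (0 : ℝ), (psiInf b j x k) ^ 2 ∧
      ∫ x in Set.Iio (0 : ℝ), (psiInf b j x k) ^ 2
          ≤ cp * k ^ (2 * (j : ℝ) - 3) * Real.exp (-k ^ 2 / b) := by
  obtain ⟨q, rfl⟩ : ∃ q, j = q + 1 := ⟨j - 1, by omega⟩
  obtain ⟨P, hP, a, ha, A, hA, R, hR, hbd⟩ := aux_bounds q
  set r := Real.sqrt b with hr
  have hr0 : 0 < r := Real.sqrt_pos.2 hb
  have hrb : r ^ 2 = b := Real.sq_sqrt hb.le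
  set D := b ^ ((1 : ℝ) / 4) *
    (Real.sqrt (Real.sqrt Real.pi * (Nat.factorial q) * 2 ^ q))⁻¹ with hD
  have hD0 : 0 < D := by positivity
  have hpsi : ∀ x k, (psiInf b (q + 1) x k) ^ 2
      = D ^ 2 * (P.eval (r * x - k / r)) ^ 2 * Real.exp (-(r * x - k / r) ^ 2) := by
    intro x k
    have : Real.exp (-(r * x - k / r) ^ 2) = Real.exp (-(r * x - k / r) ^ 2 / 2) ^ 2 := by
      rw [← Real.exp_nat_mul]; congr 1; push_cast; ring
    rw [this]
    simp only [psiInf, phiF, Nat.add_sub_cancel, hP, hD, ← hr]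
    ring
  refine ⟨1 + r * R + 2 * q * b, by positivity, D ^ 2 * a ^ 2 * Real.exp (-2 - b) / b ^ q,
    by positivity, D ^ 2 * A ^ 2 / b ^ q, by positivity, ?_⟩
  intro k hk
  have hqb : 0 ≤ 2 * q * b := by positivity
  have hrR : 0 ≤ r * R := by positivity
  have hk1 : 1 ≤ k := by linarith
  have hk0 : 0 < k := by linarith
  have hs : R ≤ k / r := by
    rw [le_div_iff₀ hr0]; linarith
  have hs0 : 0 < k / r := by positivity
  have hsq : (k / r) ^ (2 * q) = k ^ (2 * q) / b ^ q := by
    rw [div_pow, pow_mul r, hrb]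
  have hpow : k ^ (2 * ((q + 1 : ℕ) : ℝ) - 3) = k ^ (2 * q) / k := by
    have : (2 * ((q + 1 : ℕ) : ℝ) - 3) = ((2 * q : ℕ) : ℝ) - 1 := by push_cast; ring
    rw [this, Real.rpow_sub hk0, Real.rpow_natCast, Real.rpow_one]
  have hexp : ∀ x, -(r * x - k / r) ^ 2 = -k ^ 2 / b + (2 * k * x - b * x ^ 2) := by
    intro x
    rw [← hrb]; field_simp; ring
  have hy : ∀ x < 0, r * x - k / r ≤ -R ∧ |r * x - k / r| = k / r - r * x := by
    intro x hx
    have : r * x < 0 := mul_neg_of_pos_of_neg hr0 hx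
    refine ⟨by linarith, ?_⟩
    rw [abs_of_neg (by linarith)]; ring
  have key := aux_int (fun x => (psiInf b (q + 1) x k) ^ 2) (by
      simp only [hpsi]; fun_prop) k
    (D ^ 2 * (a ^ 2 * (k / r) ^ (2 * q)) * (Real.exp (-k ^ 2 / b) * Real.exp (-2 - b)))
    (D ^ 2 * (A ^ 2 * (k / r) ^ (2 * q)) * Real.exp (-k ^ 2 / b)) hk0 (fun x => sq_nonneg _)
    ?_ ?_
  · rw [hsq] at key
    rw [hpow]
    refine ⟨le_of_eq_of_le ?_ key.1, le_of_le_of_eq key.2 ?_⟩ <;> ring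
  · intro x hx hx2
    obtain ⟨hy1, hy2⟩ := hy x hx
    have hrx : r * x < 0 := mul_neg_of_pos_of_neg hr0 hx
    simp only [hpsi]
    rw [hexp, Real.exp_add]
    have hkx : -1 < k * x := by
      have := mul_lt_mul_of_pos_left hx2 hk0
      have h2 : k * -(1 / k) = -1 := by field_simp
      linarith
    have hx1 : -1 < x := by nlinarith
    have hx3 : x ^ 2 ≤ 1 := by nlinarith
    have hP2 : a ^ 2 * (k / r) ^ (2 * q) ≤ (P.eval (r * x - k / r)) ^ 2 := by
      rw [← sq_abs (P.eval _), mul_comm 2 q, pow_mul, ← mul_pow]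
      refine pow_le_pow_left₀ (by positivity) (le_trans ?_ (hbd _ hy1).1) 2
      rw [hy2]
      gcongr
      linarith
    have hE : Real.exp (-2 - b) ≤ Real.exp (2 * k * x - b * x ^ 2) := by
      apply Real.exp_le_exp.2
      nlinarith
    gcongr
  · intro x hx
    obtain ⟨hy1, hy2⟩ := hy x hx
    have hrx : r * x < 0 := mul_neg_of_pos_of_neg hr0 hx
    simp only [hpsi]
    rw [hexp, Real.exp_add]
    have h1 : k / r - r * x ≤ (k / r) * Real.exp (b * (-x) / k) := by
      have : k / r - r * x = (k / r) * (b * (-x) / k + 1) := by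
        rw [← hrb]; field_simp; ring
      rw [this]
      gcongr
      exact Real.add_one_le_exp _
    have hP2 : (P.eval (r * x - k / r)) ^ 2
        ≤ A ^ 2 * (k / r) ^ (2 * q) * Real.exp (k * (-x)) := by
      calc (P.eval (r * x - k / r)) ^ 2 = |P.eval (r * x - k / r)| ^ 2 := (sq_abs _).symm
        _ ≤ (A * |r * x - k / r| ^ q) ^ 2 := by
            gcongr; exact (hbd _ hy1).2
        _ = A ^ 2 * (k / r - r * x) ^ (2 * q) := by rw [hy2]; ring
        _ ≤ A ^ 2 * ((k / r) * Real.exp (b * (-x) / k)) ^ (2 * q) := by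
            have : 0 ≤ k / r - r * x := by linarith
            gcongr
        _ = A ^ 2 * (k / r) ^ (2 * q) * Real.exp ((2 * q : ℕ) * (b * (-x) / k)) := by
            rw [mul_pow, ← Real.exp_nat_mul, mul_assoc]
        _ ≤ _ := by
            have : ((2 * q : ℕ) : ℝ) * (b * (-x) / k) ≤ k * (-x) := by
              have h3 : ((2 * q : ℕ) : ℝ) * (b * (-x) / k) = (2 * q * b / k) * (-x) := by
                push_cast; ring
              rw [h3]
              refine mul_le_mul_of_nonneg_right ?_ (by linarith)
              rw [div_le_iff₀ hk0]
              nlinarith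
            gcongr
    have hE : Real.exp (2 * k * x - b * x ^ 2) ≤ Real.exp (2 * k * x) := by
      apply Real.exp_le_exp.2
      nlinarith [mul_nonneg hb.le (sq_nonneg x)]
    have hE2 : Real.exp (k * (-x)) * Real.exp (2 * k * x) = Real.exp (k * x) := by
      rw [← Real.exp_add]; congr 1; ring
    calc _ ≤ D ^ 2 * (A ^ 2 * (k / r) ^ (2 * q) * Real.exp (k * (-x))) *
            (Real.exp (-k ^ 2 / b) * Real.exp (2 * k * x)) := by gcongr
      _ = _ := by rw [← hE2]; ring
end

section
/- Let p > q > 0. Then there exists a constant C > 0 such that for every λ ∈ (0,1), the two-dimensional Lebesgue measure of the set {(x,ξ) ∈ ℝ² : ⟨x⟩^{−p} ⟨x,ξ⟩^{−q} ≥ λ} is at most C λ^{−1/q}. -/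
open MeasureTheory Real Set

lemma aux_bound (p q : ℝ) (hq : 0 < q) (lam x y : ℝ) (hl : 0 < lam)
    (h : lam ≤ (Real.sqrt (1 + x ^ 2)) ^ (-p) * (Real.sqrt (1 + x ^ 2 + y ^ 2)) ^ (-q)) :
    |y| ≤ lam ^ (-(1 / q)) * (1 + ‖x‖ ^ 2) ^ (-(p / q) / 2) := by
  have hA : 0 < 1 + x ^ 2 := by positivity
  have hB : 0 < Real.sqrt (1 + x ^ 2 + y ^ 2) := by positivity
  have hyB : |y| ≤ Real.sqrt (1 + x ^ 2 + y ^ 2) := by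
    apply Real.abs_le_sqrt; nlinarith [sq_nonneg x]
  refine hyB.trans ?_
  set B := Real.sqrt (1 + x ^ 2 + y ^ 2)
  have h1 : B ^ q ≤ lam⁻¹ * (Real.sqrt (1 + x ^ 2)) ^ (-p) := by
    rw [Real.rpow_neg hB.le] at h
    have hBq : 0 < B ^ q := by positivity
    rw [← div_eq_mul_inv, le_div_iff₀ hBq] at h
    rw [inv_mul_eq_div, le_div_iff₀ hl]
    linarith
  have h2 := Real.rpow_le_rpow (by positivity) h1 (by positivity : 0 ≤ 1 / q)
  rw [← Real.rpow_mul hB.le, mul_one_div_cancel hq.ne', Real.rpow_one,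
    Real.mul_rpow (by positivity) (by positivity), Real.inv_rpow hl.le,
    ← Real.rpow_neg hl.le, Real.sqrt_eq_rpow, ← Real.rpow_mul hA.le, ← Real.rpow_mul hA.le] at h2
  convert h2 using 3
  · rfl
  · simp
  · ring

/-- Let `p > q > 0`. Then there is `C > 0` such that for every `λ ∈ (0,1)`, the
two-dimensional Lebesgue measure of `{(x,ξ) : ⟨x⟩^{-p} ⟨x,ξ⟩^{-q} ≥ λ}` is at most
`C λ^{-1/q}`. -/
theorem stmt8 (p q : ℝ) (hq : 0 < q) (hpq : q < p) :
    ∃ C > (0 : ℝ), ∀ lam : ℝ, 0 < lam → lam < 1 →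
      volume {z : ℝ × ℝ |
          lam ≤ (Real.sqrt (1 + z.1 ^ 2)) ^ (-p) *
            (Real.sqrt (1 + z.1 ^ 2 + z.2 ^ 2)) ^ (-q)}
        ≤ ENNReal.ofReal (C * lam ^ (-(1 / q))) := by
  have hint : Integrable (fun x : ℝ => (1 + ‖x‖ ^ 2) ^ (-(p / q) / 2)) volume := by
    apply integrable_rpow_neg_one_add_norm_sq
    simp only [Module.finrank_self, Nat.cast_one]
    rwa [one_lt_div hq]
  set I := ∫ x : ℝ, (1 + ‖x‖ ^ 2) ^ (-(p / q) / 2) with hI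
  have hI0 : 0 ≤ I := integral_nonneg fun x => by positivity
  refine ⟨2 * I + 1, by positivity, fun lam hl _ => ?_⟩
  set L := lam ^ (-(1 / q)) with hL
  have hL0 : 0 < L := by positivity
  have hmeas : Measurable (fun x : ℝ => L * (1 + ‖x‖ ^ 2) ^ (-(p / q) / 2)) := by fun_prop
  calc volume _ ≤ volume {z : ℝ × ℝ | |z.2| ≤ L * (1 + ‖z.1‖ ^ 2) ^ (-(p / q) / 2)} :=
        measure_mono fun z hz => aux_bound p q hq lam z.1 z.2 hl hz
    _ = ∫⁻ x : ℝ, ENNReal.ofReal (2 * L * (1 + ‖x‖ ^ 2) ^ (-(p / q) / 2)) := by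
        have hS : MeasurableSet {z : ℝ × ℝ | |z.2| ≤ L * (1 + ‖z.1‖ ^ 2) ^ (-(p / q) / 2)} :=
          measurableSet_le (measurable_snd.abs) (hmeas.comp measurable_fst)
        rw [Measure.volume_eq_prod, Measure.prod_apply hS]
        congr 1
        ext x
        have : Prod.mk x ⁻¹' {z : ℝ × ℝ | |z.2| ≤ L * (1 + ‖z.1‖ ^ 2) ^ (-(p / q) / 2)}
            = Icc (-(L * (1 + ‖x‖ ^ 2) ^ (-(p / q) / 2)))
              (L * (1 + ‖x‖ ^ 2) ^ (-(p / q) / 2)) := by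
          ext y
          simp only [mem_preimage, mem_setOf_eq, mem_Icc, abs_le]
        rw [this, Real.volume_Icc]
        congr 1
        ring
    _ = ENNReal.ofReal (2 * L * I) := by
        rw [hI, ← integral_const_mul, ofReal_integral_eq_lintegral_ofReal (hint.const_mul _)]
        exact Filter.Eventually.of_forall fun x => by positivity
    _ ≤ _ := ENNReal.ofReal_le_ofReal (by nlinarith)
end

section
/- Let b > 0, K₀ ∈ ℝ and M ≥ 0. Then there exist constants C > 0 and c > 0 such that for every x ≤ 0, ∫_{K₀}^{∞} (1 + (x − b x')²)^{M/2} e^{−(b x' − x)²/b} dx' ≤ C e^{−c x²}. In particular this integral is exponentially decreasing as x → −∞. -/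
open MeasureTheory Real Set

lemma aux_poly_s11 (b M : ℝ) (hb : 0 < b) :
    ∃ A > (0 : ℝ), ∀ t : ℝ, (1 + t ^ 2) ^ (M / 2) ≤ A * Real.exp (t ^ 2 / (2 * b)) := by
  obtain ⟨n, hn⟩ := exists_nat_ge (M / 2)
  refine ⟨n.factorial * (2 * b) ^ n * Real.exp (1 / (2 * b)), by positivity, fun t => ?_⟩
  have h1 : (1 + t ^ 2) ^ (M / 2) ≤ (1 + t ^ 2) ^ n := by
    rw [← Real.rpow_natCast (1 + t ^ 2) n]
    exact Real.rpow_le_rpow_of_exponent_le (by nlinarith [sq_nonneg t]) hn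
  have h2 := Real.pow_div_factorial_le_exp ((1 + t ^ 2) / (2 * b)) (by positivity) n
  have h3 : Real.exp ((1 + t ^ 2) / (2 * b))
      = Real.exp (1 / (2 * b)) * Real.exp (t ^ 2 / (2 * b)) := by
    rw [← Real.exp_add, add_div]
  rw [h3, div_pow, div_div, div_le_iff₀ (by positivity)] at h2
  calc _ ≤ _ := h1
    _ ≤ _ := h2
    _ = _ := by ring

/-- Let `b > 0`, `K₀ ∈ ℝ` and `M ≥ 0`. Then there exist `C > 0` and `c > 0` such that
for every `x ≤ 0`,
`∫_{K₀}^∞ (1 + (x - b x')²)^{M/2} e^{-(b x' - x)²/b} dx' ≤ C e^{-c x²}`. -/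
theorem stmt11 (b K₀ M : ℝ) (hb : 0 < b) (hM : 0 ≤ M) :
    ∃ C > (0 : ℝ), ∃ c > (0 : ℝ), ∀ x : ℝ, x ≤ 0 →
      ∫ x' in Set.Ioi K₀,
          (1 + (x - b * x') ^ 2) ^ (M / 2) * Real.exp (-(b * x' - x) ^ 2 / b)
        ≤ C * Real.exp (-c * x ^ 2) := by
  obtain ⟨A, hA, hpoly⟩ := aux_poly_s11 b M hb
  set I := ∫ y in Set.Ioi K₀, Real.exp (-(b / 2) * y ^ 2) with hI
  have hI0 : 0 ≤ I := integral_nonneg fun y => (Real.exp_pos _).le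
  refine ⟨A * Real.exp (b * K₀ ^ 2) * I + 1, by positivity, 1 / (4 * b), by positivity,
    fun x hx => ?_⟩
  have hint : IntegrableOn (fun y : ℝ => Real.exp (-(b / 2) * y ^ 2)) (Set.Ioi K₀) :=
    (integrable_exp_neg_mul_sq (by positivity)).integrableOn
  calc _ ≤ ∫ y in Set.Ioi K₀, (A * Real.exp (b * K₀ ^ 2) * Real.exp (-(1 / (4 * b)) * x ^ 2))
            * Real.exp (-(b / 2) * y ^ 2) := by
        apply integral_mono_of_nonneg
        · exact Filter.Eventually.of_forall fun y => by positivity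
        · exact hint.const_mul _
        · refine (ae_restrict_iff' measurableSet_Ioi).2 (Filter.Eventually.of_forall fun y hy => ?_)
          have hy' : K₀ < y := hy
          have h1 := hpoly (x - b * y)
          calc _ ≤ A * Real.exp ((x - b * y) ^ 2 / (2 * b)) * Real.exp (-(b * y - x) ^ 2 / b) := by
                exact mul_le_mul_of_nonneg_right h1 (Real.exp_pos _).le
            _ = A * Real.exp (-(x - b * y) ^ 2 / (2 * b)) := by
                rw [mul_assoc, ← Real.exp_add]
                congr 2
                field_simp
                ring
            _ ≤ A * Real.exp (b * K₀ ^ 2 + -(1 / (4 * b)) * x ^ 2 + -(b / 2) * y ^ 2) := by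
                gcongr
                have e : b * K₀ ^ 2 + -(1 / (4 * b)) * x ^ 2 + -(b / 2) * y ^ 2
                    = (2 * b ^ 2 * K₀ ^ 2 - x ^ 2 / 2 - b ^ 2 * y ^ 2) / (2 * b) := by
                  field_simp
                  ring
                rw [e]
                gcongr
                have h2 : 0 ≤ b * ((y - K₀) * (-x)) :=
                  mul_nonneg hb.le (mul_nonneg (by linarith) (by linarith))
                nlinarith [sq_nonneg (x - 2 * b * K₀)]
            _ = _ := by
                rw [Real.exp_add, Real.exp_add]
                ring
    _ = A * Real.exp (b * K₀ ^ 2) * I * Real.exp (-(1 / (4 * b)) * x ^ 2) := by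
        rw [integral_const_mul]
        ring
    _ ≤ _ := by
        gcongr
        linarith
end

section
/- Let b > 0, α ∈ ℝ, K > 1 and c₋, c₊ > 0. Let E : (K, ∞) → (0, ∞) be a continuous strictly decreasing function with lim_{k→∞} E(k) = 0 and satisfying c₋ k^{α} e^{−k²/b} ≤ E(k) ≤ c₊ k^{α} e^{−k²/b} for all k > K, and let ρ be its inverse function, defined on an interval (0, s₀). Then there exist s₁ ∈ (0, min(s₀,1)) and constants d₋, d₊ > 0 such that for all s ∈ (0, s₁), d₋ (ln(1/s))^{1/2} ≤ ρ(s) ≤ d₊ (ln(1/s))^{1/2}. -/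
open MeasureTheory Real Set Filter

/-- Let `b > 0`, `α ∈ ℝ`, `K > 1`, `c₋, c₊ > 0`. Let `E : (K,∞) → (0,∞)` be continuous,
strictly decreasing, tending to `0` at `∞` with `c₋ k^α e^{-k²/b} ≤ E(k) ≤ c₊ k^α e^{-k²/b}`
for `k > K`, and let `ρ` be its inverse, defined on `(0, s₀)`. Then there are
`s₁ ∈ (0, min(s₀,1))` and `d₋, d₊ > 0` with
`d₋ (ln(1/s))^{1/2} ≤ ρ(s) ≤ d₊ (ln(1/s))^{1/2}` for all `s ∈ (0, s₁)`. -/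
theorem stmt12 (b α K cm cp : ℝ) (hb : 0 < b) (hK : 1 < K) (hcm : 0 < cm) (hcp : 0 < cp)
    (E : ℝ → ℝ)
    (hcont : ContinuousOn E (Set.Ioi K))
    (hanti : StrictAntiOn E (Set.Ioi K))
    (hpos : ∀ k, K < k → 0 < E k)
    (hlim : Tendsto E atTop (nhds 0))
    (hbd : ∀ k, K < k →
      cm * k ^ α * Real.exp (-k ^ 2 / b) ≤ E k ∧ E k ≤ cp * k ^ α * Real.exp (-k ^ 2 / b))
    (s₀ : ℝ) (hs₀ : 0 < s₀) (ρ : ℝ → ℝ)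
    (hρ : ∀ s ∈ Set.Ioo (0 : ℝ) s₀, K < ρ s ∧ E (ρ s) = s) :
    ∃ s₁ ∈ Set.Ioo (0 : ℝ) (min s₀ 1), ∃ dm > (0 : ℝ), ∃ dp > (0 : ℝ),
      ∀ s ∈ Set.Ioo (0 : ℝ) s₁,
        dm * Real.sqrt (Real.log (1 / s)) ≤ ρ s ∧
        ρ s ≤ dp * Real.sqrt (Real.log (1 / s)) := by
  obtain ⟨C, hC⟩ : ∃ C, C = b * α ^ 2 + |Real.log cp| := ⟨_, rfl⟩
  obtain ⟨A, hA⟩ : ∃ A, A = |Real.log cm| + |α| + 1 / b := ⟨_, rfl⟩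
  have hb' : 0 < 1 / b := by positivity
  have hA0 : 0 < A := by rw [hA]; positivity
  have hm : 0 < min s₀ 1 := lt_min hs₀ one_pos
  refine ⟨min (min s₀ 1 / 2) (Real.exp (-C)), ⟨lt_min (by linarith) (Real.exp_pos _), ?_⟩,
    (Real.sqrt A)⁻¹, by positivity, Real.sqrt (4 * b), by positivity, ?_⟩
  · exact lt_of_le_of_lt (min_le_left _ _) (by linarith)
  intro s hs
  obtain ⟨hs0, hs1⟩ := hs
  have h1 : s < min s₀ 1 / 2 := lt_of_lt_of_le hs1 (min_le_left _ _)
  have h2 : s < Real.exp (-C) := lt_of_lt_of_le hs1 (min_le_right _ _)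
  have h3 : s < s₀ := by have := min_le_left s₀ 1; linarith
  obtain ⟨hk, hEk⟩ := hρ s ⟨hs0, h3⟩
  obtain ⟨hlo, hhi⟩ := hbd _ hk
  rw [hEk] at hlo hhi
  generalize ρ s = k at *
  have hk1 : 1 < k := hK.trans hk
  have hk0 : 0 < k := by linarith
  have hlog : ∀ c : ℝ, 0 < c → Real.log (c * k ^ α * Real.exp (-k ^ 2 / b))
      = Real.log c + α * Real.log k - k ^ 2 * (1 / b) := by
    intro c hc
    have : 0 < k ^ α := Real.rpow_pos_of_pos hk0 _
    rw [Real.log_mul (by positivity) (by positivity), Real.log_mul (by positivity) (by positivity),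
      Real.log_exp, Real.log_rpow hk0]
    ring
  have hka : 0 < k ^ α := Real.rpow_pos_of_pos hk0 _
  have l1 := Real.log_le_log (by positivity) hlo
  have l2 := Real.log_le_log hs0 hhi
  rw [hlog _ hcm] at l1
  rw [hlog _ hcp] at l2
  have l3 : Real.log s < -C := (Real.log_lt_iff_lt_exp hs0).2 h2
  have hL : Real.log (1 / s) = -Real.log s := by rw [one_div, Real.log_inv]
  rw [hL]
  have hlk0 : 0 ≤ Real.log k := Real.log_nonneg hk1.le
  have hlk : Real.log k ≤ k := by have := Real.log_le_sub_one_of_pos hk0; linarith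
  have ha : |α * Real.log k| ≤ |α| * k := by
    rw [abs_mul, abs_of_nonneg hlk0]; gcongr
  obtain ⟨ha1, ha2⟩ := abs_le.1 ha
  have hkk : k ≤ k ^ 2 := by nlinarith
  constructor
  · rw [inv_mul_le_iff₀ (by positivity), ← Real.sqrt_sq hk0.le, ← Real.sqrt_mul hA0.le]
    apply Real.sqrt_le_sqrt
    have e1 : |α| * k ≤ |α| * k ^ 2 := by gcongr
    have e2 : |Real.log cm| * 1 ≤ |Real.log cm| * k ^ 2 := by gcongr; linarith
    have := neg_abs_le (Real.log cm)
    rw [hA]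
    linarith
  · rw [← Real.sqrt_mul (by positivity)]
    apply Real.le_sqrt_of_sq_le
    have e3 : |α| * k ≤ k ^ 2 * (1 / b) / 4 + b * α ^ 2 := by
      have h := mul_nonneg hb'.le (sq_nonneg (k / 2 - b * |α|))
      have : 1 / b * (k / 2 - b * |α|) ^ 2 = k ^ 2 * (1 / b) / 4 + b * |α| ^ 2 - |α| * k := by
        field_simp
        ring
      rw [sq_abs] at this
      linarith
    have := le_abs_self (Real.log cp)
    have e4 : k ^ 2 * (1 / b) ≤ 4 * (-Real.log s) := by
      have : 0 ≤ k ^ 2 * (1 / b) := by positivity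
      linarith
    have e5 : k ^ 2 = b * (k ^ 2 * (1 / b)) := by field_simp
    rw [e5]
    nlinarith
end

section
/- Let b > 0, α ∈ ℝ, K > 1 and c₋, c₊ > 0. Let E : (K, ∞) → (0, ∞) be a differentiable strictly decreasing function with lim_{k→∞} E(k) = 0, satisfying c₋ k^{α} e^{−k²/b} ≤ E(k) ≤ c₊ k^{α} e^{−k²/b} and c₋ k^{α+1} e^{−k²/b} ≤ −E'(k) ≤ c₊ k^{α+1} e^{−k²/b} for all k > K, and let ρ be its inverse function, defined on an interval (0, s₀). Then ρ is differentiable and there exist s₁ ∈ (0, min(s₀,1)) and constants d₋, d₊ > 0 such that for all s ∈ (0, s₁), d₋ / (s (ln(1/s))^{1/2}) ≤ −ρ'(s) ≤ d₊ / (s (ln(1/s))^{1/2}). -/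
open MeasureTheory Real Set Filter

lemma aux_growth (b α c : ℝ) (hb : 0 < b) :
    ∀ᶠ k : ℝ in atTop, |α * Real.log k + c| ≤ k ^ 2 / (2 * b) := by
  have h1 : (fun k : ℝ => Real.log k) =o[atTop] (fun k : ℝ => k ^ (2 : ℝ)) :=
    isLittleO_log_rpow_atTop (by norm_num)
  have h2 : (fun _ : ℝ => c) =o[atTop] (fun k : ℝ => k ^ (2 : ℝ)) := by
    rw [Asymptotics.isLittleO_const_left]
    right
    exact tendsto_norm_atTop_atTop.comp (tendsto_rpow_atTop (by norm_num))
  have h3 := (h1.const_mul_left α).add h2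
  have h4 := h3.bound (show 0 < 1 / (2 * b) by positivity)
  filter_upwards [h4] with k hk
  rw [Real.rpow_two, Real.norm_eq_abs, Real.norm_eq_abs, abs_of_nonneg (sq_nonneg k)] at hk
  calc _ ≤ _ := hk
    _ = _ := by ring

lemma aux_log (b α c k : ℝ) (hc : 0 < c) (hk : 0 < k) :
    Real.log (c * k ^ α * Real.exp (-k ^ 2 / b)) = α * Real.log k + Real.log c - k ^ 2 / b := by
  have := Real.rpow_pos_of_pos hk α
  rw [Real.log_mul (by positivity) (by positivity), Real.log_mul (by positivity) (by positivity),
    Real.log_exp, Real.log_rpow hk]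
  ring

/-- Let `b > 0`, `α ∈ ℝ`, `K > 1`, `c₋, c₊ > 0`. Let `E : (K,∞) → (0,∞)` be a
differentiable strictly decreasing function tending to `0` at `∞`, with
`c₋ k^α e^{-k²/b} ≤ E(k) ≤ c₊ k^α e^{-k²/b}` and
`c₋ k^{α+1} e^{-k²/b} ≤ -E'(k) ≤ c₊ k^{α+1} e^{-k²/b}` for `k > K`, and let `ρ` be its
inverse, defined on `(0, s₀)`. Then `ρ` is differentiable and there are
`s₁ ∈ (0, min(s₀,1))` and `d₋, d₊ > 0` with
`d₋ / (s (ln(1/s))^{1/2}) ≤ -ρ'(s) ≤ d₊ / (s (ln(1/s))^{1/2})` for `s ∈ (0, s₁)`. -/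
theorem stmt13 (b α K cm cp : ℝ) (hb : 0 < b) (hK : 1 < K) (hcm : 0 < cm) (hcp : 0 < cp)
    (E : ℝ → ℝ)
    (hdiff : ∀ k, K < k → DifferentiableAt ℝ E k)
    (hanti : StrictAntiOn E (Set.Ioi K))
    (hpos : ∀ k, K < k → 0 < E k)
    (hlim : Tendsto E atTop (nhds 0))
    (hbd : ∀ k, K < k →
      cm * k ^ α * Real.exp (-k ^ 2 / b) ≤ E k ∧ E k ≤ cp * k ^ α * Real.exp (-k ^ 2 / b))
    (hbd' : ∀ k, K < k →
      cm * k ^ (α + 1) * Real.exp (-k ^ 2 / b) ≤ -(deriv E k) ∧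
      -(deriv E k) ≤ cp * k ^ (α + 1) * Real.exp (-k ^ 2 / b))
    (s₀ : ℝ) (hs₀ : 0 < s₀) (ρ : ℝ → ℝ)
    (hρ : ∀ s ∈ Set.Ioo (0 : ℝ) s₀, K < ρ s ∧ E (ρ s) = s) :
    (∀ s ∈ Set.Ioo (0 : ℝ) s₀, DifferentiableAt ℝ ρ s) ∧
    ∃ s₁ ∈ Set.Ioo (0 : ℝ) (min s₀ 1), ∃ dm > (0 : ℝ), ∃ dp > (0 : ℝ),
      ∀ s ∈ Set.Ioo (0 : ℝ) s₁,
        dm / (s * Real.sqrt (Real.log (1 / s))) ≤ -(deriv ρ s) ∧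
        -(deriv ρ s) ≤ dp / (s * Real.sqrt (Real.log (1 / s))) := by
  have hderiv : ∀ s ∈ Set.Ioo (0 : ℝ) s₀, HasDerivAt ρ (deriv E (ρ s))⁻¹ s := by
    intro s hs
    obtain ⟨hk, hEk⟩ := hρ s hs
    have hkpos : 0 < ρ s := by linarith
    have hne : deriv E (ρ s) ≠ 0 := by
      have h1 := (hbd' _ hk).1
      have h2 : 0 < cm * (ρ s) ^ (α + 1) * Real.exp (-(ρ s) ^ 2 / b) := by positivity
      linarith
    refine HasDerivAt.of_local_left_inverse ?_ (hdiff _ hk).hasDerivAt hne ?_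
    · rw [ContinuousAt, tendsto_order]
      constructor
      · intro a ha
        have hm1 : max a ((K + ρ s) / 2) < ρ s := max_lt ha (by linarith)
        have hm2 : K < max a ((K + ρ s) / 2) := lt_max_of_lt_right (by linarith)
        have h := hanti hm2 hk hm1
        rw [hEk] at h
        filter_upwards [Iio_mem_nhds h, Ioo_mem_nhds hs.1 hs.2] with y hy hy'
        obtain ⟨hy1, hy2⟩ := hρ y hy'
        have : E (ρ y) < E (max a ((K + ρ s) / 2)) := by rw [hy2]; exact hy
        exact lt_of_le_of_lt (le_max_left _ _) ((hanti.lt_iff_gt hy1 hm2).1 this)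
      · intro a ha
        have hm2 : K < a := hk.trans ha
        have h := hanti hk hm2 ha
        rw [hEk] at h
        filter_upwards [Ioi_mem_nhds h, Ioo_mem_nhds hs.1 hs.2] with y hy hy'
        obtain ⟨hy1, hy2⟩ := hρ y hy'
        have : E a < E (ρ y) := by rw [hy2]; exact hy
        exact (hanti.lt_iff_gt hm2 hy1).1 this
    · filter_upwards [Ioo_mem_nhds hs.1 hs.2] with y hy
      exact (hρ y hy).2
  refine ⟨fun s hs => (hderiv s hs).differentiableAt, ?_⟩
  obtain ⟨M, hM⟩ := eventually_atTop.1 ((aux_growth b α (Real.log cm) hb).and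
    ((aux_growth b α (Real.log cp) hb).and (eventually_gt_atTop K)))
  have hMK : K < M := (hM M le_rfl).2.2
  have hEM := hpos M hMK
  refine ⟨min (E M) (min (s₀ / 2) (1 / 2)), ⟨by positivity, ?_⟩,
    (cm / cp) / Real.sqrt (2 * b), by positivity, (cp / cm) * Real.sqrt (2 / b), by positivity, ?_⟩
  · refine lt_of_le_of_lt (min_le_right _ _) (lt_min ?_ ?_)
    · exact lt_of_le_of_lt (min_le_left _ _) (by linarith)
    · exact lt_of_le_of_lt (min_le_right _ _) (by norm_num)
  intro s hs
  obtain ⟨hs0, hs1⟩ := hs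
  obtain ⟨hsM, hs1⟩ := lt_min_iff.1 hs1
  obtain ⟨hss, hs1⟩ := lt_min_iff.1 hs1
  have hsI : s ∈ Set.Ioo (0 : ℝ) s₀ := ⟨hs0, by linarith⟩
  rw [(hderiv s hsI).deriv]
  obtain ⟨hk, hEk⟩ := hρ s hsI
  generalize ρ s = k at hk hEk
  have hkM : M < k := by
    rw [← hEk] at hsM
    exact (hanti.lt_iff_gt hk hMK).1 hsM
  have hk0 : 0 < k := by linarith
  obtain ⟨hg1, hg2, -⟩ := hM k hkM.le
  obtain ⟨hb1, hb2⟩ := hbd k hk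
  obtain ⟨hd1, hd2⟩ := hbd' k hk
  rw [hEk] at hb1 hb2
  have hl1 := Real.log_le_log (by positivity) hb1
  have hl2 := Real.log_le_log hs0 hb2
  rw [aux_log b α cm k hcm hk0] at hl1
  rw [aux_log b α cp k hcp hk0] at hl2
  have hL : Real.log (1 / s) = - Real.log s := by rw [one_div, Real.log_inv]
  have hhalf : k ^ 2 / b = k ^ 2 / (2 * b) + k ^ 2 / (2 * b) := by field_simp; ring
  have hq : 0 < k ^ 2 / (2 * b) := by positivity
  have hLlo : k ^ 2 / (2 * b) ≤ Real.log (1 / s) := by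
    rw [hL]; linarith [(abs_le.1 hg2).2]
  have hLhi : Real.log (1 / s) ≤ (2 / b) * k ^ 2 := by
    have : (2 / b) * k ^ 2 = 4 * (k ^ 2 / (2 * b)) := by field_simp; ring
    rw [hL, this]; linarith [(abs_le.1 hg1).1]
  have hSlo : k / Real.sqrt (2 * b) ≤ Real.sqrt (Real.log (1 / s)) := by
    have := Real.sqrt_le_sqrt hLlo
    rwa [Real.sqrt_div (sq_nonneg k), Real.sqrt_sq hk0.le] at this
  have hShi : Real.sqrt (Real.log (1 / s)) ≤ Real.sqrt (2 / b) * k := by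
    have := Real.sqrt_le_sqrt hLhi
    rwa [Real.sqrt_mul (by positivity), Real.sqrt_sq hk0.le] at this
  generalize Real.sqrt (Real.log (1 / s)) = S at hSlo hShi
  have hS0 : 0 < S := lt_of_lt_of_le (by positivity) hSlo
  rw [Real.rpow_add_one hk0.ne'] at hd1 hd2
  have hD1 : (cm / cp) * (k * s) ≤ -(deriv E k) := by
    refine le_trans ?_ hd1
    calc (cm / cp) * (k * s) ≤ (cm / cp) * (k * (cp * k ^ α * Real.exp (-k ^ 2 / b))) := by gcongr
      _ = _ := by field_simp
  have hD2 : -(deriv E k) ≤ (cp / cm) * (k * s) := by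
    refine hd2.trans ?_
    calc _ = (cp / cm) * (k * (cm * k ^ α * Real.exp (-k ^ 2 / b))) := by field_simp
      _ ≤ (cp / cm) * (k * s) := by gcongr
  rw [← inv_neg]
  generalize -(deriv E k) = D at hD1 hD2
  have hD0 : 0 < D := lt_of_lt_of_le (by positivity) hD1
  have hq1 : 0 < Real.sqrt (2 * b) := by positivity
  constructor
  · refine le_trans ?_ (inv_anti₀ hD0 hD2)
    calc _ ≤ (cm / cp) / Real.sqrt (2 * b) / (s * (k / Real.sqrt (2 * b))) := by gcongr
      _ = _ := by field_simp
  · refine le_trans (inv_anti₀ (by positivity) hD1) ?_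
    rw [le_div_iff₀ (by positivity)]
    calc (cm / cp * (k * s))⁻¹ * (s * S)
        ≤ (cm / cp * (k * s))⁻¹ * (s * (Real.sqrt (2 / b) * k)) := by gcongr
      _ = _ := by field_simp
end

section
/- Let b > 0, α ∈ ℝ, K > 1 and c₋, c₊ > 0. Let E : (K, ∞) → (0, ∞) be a twice differentiable strictly decreasing function with lim_{k→∞} E(k) = 0, satisfying c₋ k^{α} e^{−k²/b} ≤ E(k) ≤ c₊ k^{α} e^{−k²/b}, c₋ k^{α+1} e^{−k²/b} ≤ −E'(k) ≤ c₊ k^{α+1} e^{−k²/b}, and c₋ k^{α+2} e^{−k²/b} ≤ E''(k) ≤ c₊ k^{α+2} e^{−k²/b} for all k > K, and let ρ be its inverse function, defined on an interval (0, s₀). Then ρ is twice differentiable and there exist s₁ ∈ (0, min(s₀,1)) and constants d₋, d₊ > 0 such that for all s ∈ (0, s₁), d₋ / (s² (ln(1/s))^{1/2}) ≤ ρ''(s) ≤ d₊ / (s² (ln(1/s))^{1/2}). -/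
open MeasureTheory Real Set Filter

theorem aux_log_s14 (b α cm cp : ℝ) (hb : 0 < b) (hcm : 0 < cm) (hcp : 0 < cp) (k s : ℝ)
    (hk1 : 1 ≤ k) (hk : 2 * b * (|Real.log cm| + |Real.log cp| + |α|) ≤ k) (hs : 0 < s)
    (h1 : cm * k ^ α * Real.exp (-k ^ 2 / b) ≤ s)
    (h2 : s ≤ cp * k ^ α * Real.exp (-k ^ 2 / b)) :
    k ^ 2 / (2 * b) ≤ Real.log (1 / s) ∧ Real.log (1 / s) ≤ 2 * k ^ 2 / b := by
  have hk0 : 0 < k := by linarith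
  have hka : 0 < k ^ α := Real.rpow_pos_of_pos hk0 α
  have key : ∀ c : ℝ, 0 < c → Real.log (c * k ^ α * Real.exp (-k ^ 2 / b))
      = Real.log c + α * Real.log k - k ^ 2 / b := by
    intro c hc
    rw [Real.log_mul (by positivity) (by positivity), Real.log_mul (by positivity) (by positivity),
      Real.log_rpow hk0, Real.log_exp]
    ring
  have e1 := Real.log_le_log (by positivity) h1
  have e2 := Real.log_le_log hs h2
  rw [key cm hcm] at e1
  rw [key cp hcp] at e2
  have hl0 : 0 ≤ Real.log k := Real.log_nonneg hk1
  have hl1 : Real.log k ≤ k := by linarith [Real.log_le_sub_one_of_pos hk0]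
  have ha : |α * Real.log k| ≤ |α| * k := by
    rw [abs_mul, abs_of_nonneg hl0]
    exact mul_le_mul_of_nonneg_left hl1 (abs_nonneg _)
  have hq : |Real.log cm| + |Real.log cp| + |α| * k ≤ k ^ 2 / (2 * b) := by
    rw [le_div_iff₀ (by positivity)]
    have t1 := mul_le_mul_of_nonneg_right hk hk0.le
    have t2 : 0 ≤ (|Real.log cm| + |Real.log cp|) * (k - 1) * b :=
      mul_nonneg (mul_nonneg (by positivity) (by linarith)) hb.le
    nlinarith
  have hhalf : k ^ 2 / b = 2 * (k ^ 2 / (2 * b)) := by field_simp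
  have hhalf2 : 2 * k ^ 2 / b = 4 * (k ^ 2 / (2 * b)) := by field_simp; norm_num
  rw [one_div, Real.log_inv, hhalf2]
  rw [hhalf] at e1 e2
  have a1 := abs_le.1 ha
  have p1 := neg_abs_le (Real.log cm)
  have p2 := le_abs_self (Real.log cp)
  have p3 := abs_nonneg (Real.log cp)
  have p4 := abs_nonneg (Real.log cm)
  have p5 : 0 ≤ k ^ 2 / (2 * b) := by positivity
  constructor <;> linarith [a1.1, a1.2]

theorem aux_alg (cm cp k A s D2 D1 L m M : ℝ) (hcm : 0 < cm) (hcp : 0 < cp) (hk : 0 < k)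
    (hA : 0 < A) (hs : 0 < s) (hL : 0 < L) (hm : 0 < m)
    (h1 : cm * A ≤ s) (h2 : s ≤ cp * A)
    (g1 : cm * (k * A) ≤ D1) (g2 : D1 ≤ cp * (k * A))
    (f1 : cm * (k ^ 2 * A) ≤ D2) (f2 : D2 ≤ cp * (k ^ 2 * A))
    (l1 : k ≤ m * L) (l2 : L ≤ M * k) :
    (cm ^ 3 / cp ^ 3 / m) / (s ^ 2 * L) ≤ D2 / D1 ^ 3 ∧
    D2 / D1 ^ 3 ≤ (cp ^ 3 / cm ^ 3 * M) / (s ^ 2 * L) := by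
  have hD1 : 0 < D1 := lt_of_lt_of_le (by positivity) g1
  have hD2 : 0 < D2 := lt_of_lt_of_le (by positivity) f1
  have hM : 0 < M := by
    by_contra h
    nlinarith
  constructor
  · calc (cm ^ 3 / cp ^ 3 / m) / (s ^ 2 * L) = cm ^ 3 / cp ^ 3 / (s ^ 2 * (m * L)) := by
          field_simp
      _ ≤ cm ^ 3 / cp ^ 3 / ((cm * A) ^ 2 * k) := by gcongr
      _ = cm * (k ^ 2 * A) / (cp * (k * A)) ^ 3 := by field_simp
      _ ≤ D2 / D1 ^ 3 := by gcongr
  · calc D2 / D1 ^ 3 ≤ cp * (k ^ 2 * A) / (cm * (k * A)) ^ 3 := by gcongr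
      _ = cp ^ 3 / cm ^ 3 * M / ((cp * A) ^ 2 * (M * k)) := by field_simp
      _ ≤ (cp ^ 3 / cm ^ 3 * M) / (s ^ 2 * L) := by gcongr

/-- Let `b > 0`, `α ∈ ℝ`, `K > 1`, `c₋, c₊ > 0`. Let `E : (K,∞) → (0,∞)` be a twice
differentiable strictly decreasing function tending to `0` at `∞`, with
`c₋ k^α e^{-k²/b} ≤ E(k) ≤ c₊ k^α e^{-k²/b}`,
`c₋ k^{α+1} e^{-k²/b} ≤ -E'(k) ≤ c₊ k^{α+1} e^{-k²/b}` and
`c₋ k^{α+2} e^{-k²/b} ≤ E''(k) ≤ c₊ k^{α+2} e^{-k²/b}` for `k > K`, and let `ρ` be its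
inverse, defined on `(0, s₀)`. Then `ρ` is twice differentiable and there are
`s₁ ∈ (0, min(s₀,1))` and `d₋, d₊ > 0` with
`d₋ / (s² (ln(1/s))^{1/2}) ≤ ρ''(s) ≤ d₊ / (s² (ln(1/s))^{1/2})` for `s ∈ (0, s₁)`. -/
theorem stmt14 (b α K cm cp : ℝ) (hb : 0 < b) (hK : 1 < K) (hcm : 0 < cm) (hcp : 0 < cp)
    (E : ℝ → ℝ)
    (hdiff : ∀ k, K < k → DifferentiableAt ℝ E k)
    (hdiff2 : ∀ k, K < k → DifferentiableAt ℝ (deriv E) k)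
    (hanti : StrictAntiOn E (Set.Ioi K))
    (hpos : ∀ k, K < k → 0 < E k)
    (hlim : Tendsto E atTop (nhds 0))
    (hbd : ∀ k, K < k →
      cm * k ^ α * Real.exp (-k ^ 2 / b) ≤ E k ∧ E k ≤ cp * k ^ α * Real.exp (-k ^ 2 / b))
    (hbd' : ∀ k, K < k →
      cm * k ^ (α + 1) * Real.exp (-k ^ 2 / b) ≤ -(deriv E k) ∧
      -(deriv E k) ≤ cp * k ^ (α + 1) * Real.exp (-k ^ 2 / b))
    (hbd'' : ∀ k, K < k →
      cm * k ^ (α + 2) * Real.exp (-k ^ 2 / b) ≤ deriv (deriv E) k ∧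
      deriv (deriv E) k ≤ cp * k ^ (α + 2) * Real.exp (-k ^ 2 / b))
    (s₀ : ℝ) (hs₀ : 0 < s₀) (ρ : ℝ → ℝ)
    (hρ : ∀ s ∈ Set.Ioo (0 : ℝ) s₀, K < ρ s ∧ E (ρ s) = s) :
    (∀ s ∈ Set.Ioo (0 : ℝ) s₀,
        DifferentiableAt ℝ ρ s ∧ DifferentiableAt ℝ (deriv ρ) s) ∧
    ∃ s₁ ∈ Set.Ioo (0 : ℝ) (min s₀ 1), ∃ dm > (0 : ℝ), ∃ dp > (0 : ℝ),
      ∀ s ∈ Set.Ioo (0 : ℝ) s₁,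
        dm / (s ^ 2 * Real.sqrt (Real.log (1 / s))) ≤ deriv (deriv ρ) s ∧
        deriv (deriv ρ) s ≤ dp / (s ^ 2 * Real.sqrt (Real.log (1 / s))) := by
  have hopen : ∀ s ∈ Set.Ioo (0 : ℝ) s₀, ∀ᶠ t in nhds s, t ∈ Set.Ioo (0 : ℝ) s₀ :=
    fun s hs => isOpen_Ioo.mem_nhds hs
  have hneg : ∀ k, K < k → deriv E k < 0 := by
    intro k hk
    have hk0 : 0 < k := by linarith
    have h1 : 0 < cm * k ^ (α + 1) * Real.exp (-k ^ 2 / b) := by positivity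
    linarith [(hbd' k hk).1]
  have hcont : ∀ s ∈ Set.Ioo (0 : ℝ) s₀, ContinuousAt ρ s := by
    intro s hs
    obtain ⟨hk, hE⟩ := hρ s hs
    rw [Metric.continuousAt_iff']
    intro ε hε
    set δ := min (ε / 2) ((ρ s - K) / 2) with hδ
    have hδ0 : 0 < δ := lt_min (by linarith) (by linarith)
    have hδ1 : δ < ε := lt_of_le_of_lt (min_le_left _ _) (by linarith)
    have hδ2 : K < ρ s - δ := by
      have : δ ≤ (ρ s - K) / 2 := min_le_right _ _
      linarith
    have u1 : E (ρ s + δ) < s := by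
      have := hanti (a := ρ s) (b := ρ s + δ) hk (by simp only [Set.mem_Ioi]; linarith) (by linarith)
      linarith
    have u2 : s < E (ρ s - δ) := by
      have := hanti (a := ρ s - δ) (b := ρ s) hδ2 hk (by linarith)
      linarith
    filter_upwards [hopen s hs, Ioo_mem_nhds u1 u2] with t ht ht2
    obtain ⟨htk, htE⟩ := hρ t ht
    rw [← htE] at ht2
    have v1 := (hanti.lt_iff_gt (a := ρ s + δ) (b := ρ t)
      (by simp only [Set.mem_Ioi]; linarith) htk).1 ht2.1
    have v2 := (hanti.lt_iff_gt (a := ρ t) (b := ρ s - δ) htk hδ2).1 ht2.2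
    rw [Real.dist_eq, abs_lt]
    constructor <;> linarith
  have hd1 : ∀ s ∈ Set.Ioo (0 : ℝ) s₀, HasDerivAt ρ (deriv E (ρ s))⁻¹ s := by
    intro s hs
    obtain ⟨hk, hE⟩ := hρ s hs
    refine HasDerivAt.of_local_left_inverse (hcont s hs) (hdiff _ hk).hasDerivAt
      (hneg _ hk).ne ?_
    filter_upwards [hopen s hs] with t ht using (hρ t ht).2
  have hd2 : ∀ s ∈ Set.Ioo (0 : ℝ) s₀,
      HasDerivAt (deriv ρ) (deriv (deriv E) (ρ s) / (-(deriv E (ρ s))) ^ 3) s := by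
    intro s hs
    obtain ⟨hk, hE⟩ := hρ s hs
    have hne := (hneg _ hk).ne
    have h1 : HasDerivAt (fun t => deriv E (ρ t))
        (deriv (deriv E) (ρ s) * (deriv E (ρ s))⁻¹) s :=
      HasDerivAt.comp s (hdiff2 _ hk).hasDerivAt (hd1 s hs)
    have h2 := (h1.fun_inv hne).congr_of_eventuallyEq (f₁ := deriv ρ)
      (by filter_upwards [hopen s hs] with t ht using (hd1 t ht).deriv)
    have h3 : deriv (deriv E) (ρ s) / (-(deriv E (ρ s))) ^ 3
        = -(deriv (deriv E) (ρ s) * (deriv E (ρ s))⁻¹) / deriv E (ρ s) ^ 2 := by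
      have : (-(deriv E (ρ s))) ^ 3 = -(deriv E (ρ s)) ^ 3 := by ring
      rw [this]
      field_simp
    rw [h3]
    exact h2
  refine ⟨fun s hs => ⟨(hd1 s hs).differentiableAt, (hd2 s hs).differentiableAt⟩, ?_⟩
  set N := max (K + 1) (2 * b * (|Real.log cm| + |Real.log cp| + |α|)) with hN
  have hNK : K < N := lt_of_lt_of_le (by linarith) (le_max_left _ _)
  have hmin : 0 < min s₀ 1 := lt_min hs₀ one_pos
  refine ⟨min (E N) (min s₀ 1 / 2), ⟨lt_min (hpos N hNK) (by linarith), ?_⟩,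
    cm ^ 3 / cp ^ 3 / √(2 * b), by positivity, cp ^ 3 / cm ^ 3 * √(2 / b), by positivity, ?_⟩
  · exact lt_of_le_of_lt (min_le_right _ _) (by linarith)
  rintro s ⟨hs0, hs1⟩
  have hsN : s < E N := lt_of_lt_of_le hs1 (min_le_left _ _)
  have hsm : s < min s₀ 1 := by
    have := lt_of_lt_of_le hs1 (min_le_right _ _)
    linarith
  have hs : s ∈ Set.Ioo (0 : ℝ) s₀ := ⟨hs0, lt_of_lt_of_le hsm (min_le_left _ _)⟩
  have hs1' : s < 1 := lt_of_lt_of_le hsm (min_le_right _ _)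
  obtain ⟨hk, hE⟩ := hρ s hs
  rw [(hd2 s hs).deriv]
  have hNk : N < ρ s := by
    rw [← hE] at hsN
    exact (hanti.lt_iff_gt hk hNK).1 hsN
  have b0 := hbd _ hk
  have b1 := hbd' _ hk
  have b2 := hbd'' _ hk
  rw [hE] at b0
  generalize ρ s = k at *
  have hk0 : 0 < k := by linarith
  obtain ⟨l1, l2⟩ := aux_log_s14 b α cm cp hb hcm hcp k s (by linarith)
    ((le_max_right _ _).trans hNk.le) hs0 b0.1 b0.2
  have r1 : k ^ (α + 1) = k * k ^ α := by rw [Real.rpow_add_one hk0.ne']; ring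
  have r2 : k ^ (α + 2) = k ^ 2 * k ^ α := by
    rw [Real.rpow_add hk0, Real.rpow_two]; ring
  rw [r1] at b1
  rw [r2] at b2
  have hlog : 0 < Real.log (1 / s) := Real.log_pos (by rw [lt_div_iff₀ hs0]; linarith)
  refine aux_alg cm cp k (k ^ α * Real.exp (-k ^ 2 / b)) s _ _ _ (√(2 * b)) (√(2 / b)) hcm hcp hk0
    (by positivity) hs0 (Real.sqrt_pos.2 hlog) (by positivity)
    (by linarith [b0.1]) (by linarith [b0.2]) (by linarith [b1.1]) (by linarith [b1.2])
    (by linarith [b2.1]) (by linarith [b2.2]) ?_ ?_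
  · rw [← Real.sqrt_mul (by positivity)]
    apply Real.le_sqrt_of_sq_le
    rw [div_le_iff₀ (by positivity)] at l1
    linarith
  · rw [← Real.sqrt_sq hk0.le, ← Real.sqrt_mul (by positivity)]
    apply Real.sqrt_le_sqrt
    calc _ ≤ _ := l2
      _ = _ := by ring
end

section
/- Let η > 1. Then there exist C > 0 and λ₀ ∈ (0, 1/η) such that for every λ ∈ (0, λ₀) and every ε ∈ (0, λ/2), ∫_{(0, λ−ε) ∪ (λ+ε, ηλ)} ds / ( |λ − s| (ln(1/s))^{3/2} ) ≤ C ln(1/ε) / (ln(1/λ))^{3/2}. -/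
open MeasureTheory Real Set

lemma auxA (l e b : ℝ) (he : 0 < e) (hb : l + e ≤ b) :
    IntegrableOn (fun s : ℝ => |l - s|⁻¹) (Ioo (l + e) b) ∧
      ∫ s in Ioo (l + e) b, |l - s|⁻¹ = Real.log ((b - l) / e) := by
  have hc : ContinuousOn (fun s : ℝ => |l - s|⁻¹) (Icc (l + e) b) := by
    apply ContinuousOn.inv₀ (by fun_prop)
    intro x hx
    have := hx.1
    exact abs_ne_zero.mpr (by linarith)
  refine ⟨(hc.integrableOn_Icc).mono_set Ioo_subset_Icc_self, ?_⟩
  rw [← integral_Ioc_eq_integral_Ioo, ← intervalIntegral.integral_of_le hb]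
  have h1 : ∫ s in (l + e)..b, |l - s|⁻¹ = ∫ s in (l + e)..b, (fun t => t⁻¹) (s - l) := by
    apply intervalIntegral.integral_congr
    intro s hs
    rw [uIcc_of_le hb] at hs
    have := hs.1
    simp only
    rw [abs_sub_comm, abs_of_pos (by linarith)]
  rw [h1, intervalIntegral.integral_comp_sub_right (fun t : ℝ => t⁻¹), integral_inv_of_pos (by linarith) (by linarith)]
  simp

lemma auxB (l e : ℝ) (he : 0 < e) (hb : e ≤ l) :
    IntegrableOn (fun s : ℝ => |l - s|⁻¹) (Ioo 0 (l - e)) ∧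
      ∫ s in Ioo 0 (l - e), |l - s|⁻¹ = Real.log (l / e) := by
  have h0 : 0 ≤ l - e := by linarith
  have hc : ContinuousOn (fun s : ℝ => |l - s|⁻¹) (Icc 0 (l - e)) := by
    apply ContinuousOn.inv₀ (by fun_prop)
    intro x hx
    have := hx.2
    exact abs_ne_zero.mpr (by linarith)
  refine ⟨(hc.integrableOn_Icc).mono_set Ioo_subset_Icc_self, ?_⟩
  rw [← integral_Ioc_eq_integral_Ioo, ← intervalIntegral.integral_of_le h0]
  have h1 : ∫ s in (0)..(l - e), |l - s|⁻¹ = ∫ s in (0)..(l - e), (fun t => t⁻¹) (l - s) := by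
    apply intervalIntegral.integral_congr
    intro s hs
    rw [uIcc_of_le h0] at hs
    have := hs.2
    simp only
    rw [abs_of_pos (by linarith)]
  rw [h1, intervalIntegral.integral_comp_sub_left (fun t : ℝ => t⁻¹), integral_inv_of_pos (by linarith) (by linarith)]
  simp

/-- Let `η > 1`. Then there exist `C > 0` and `λ₀ ∈ (0, 1/η)` such that for every
`λ ∈ (0, λ₀)` and every `ε ∈ (0, λ/2)`,
`∫_{(0,λ-ε) ∪ (λ+ε,ηλ)} ds / (|λ - s| (ln(1/s))^{3/2}) ≤ C ln(1/ε) / (ln(1/λ))^{3/2}`. -/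
theorem stmt15 (η : ℝ) (hη : 1 < η) :
    ∃ C > (0 : ℝ), ∃ lam₀ ∈ Set.Ioo (0 : ℝ) (1 / η),
      ∀ lam ∈ Set.Ioo (0 : ℝ) lam₀, ∀ ε ∈ Set.Ioo (0 : ℝ) (lam / 2),
        ∫ s in Set.Ioo (0 : ℝ) (lam - ε) ∪ Set.Ioo (lam + ε) (η * lam),
            1 / (|lam - s| * (Real.log (1 / s)) ^ ((3 : ℝ) / 2))
          ≤ C * Real.log (1 / ε) / (Real.log (1 / lam)) ^ ((3 : ℝ) / 2) := by
  have hη0 : 0 < η := by linarith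
  refine ⟨(2:ℝ) ^ ((3 : ℝ) / 2) * 2, by positivity, 1 / η ^ 2, ⟨by positivity, ?_⟩, ?_⟩
  · apply one_div_lt_one_div_of_lt hη0
    nlinarith
  rintro l ⟨hl0, hl1⟩ e ⟨he0, he1⟩
  have hl2 : l * η ^ 2 < 1 := by rwa [lt_div_iff₀ (by positivity)] at hl1
  have hl3 : η * l < 1 := by nlinarith [mul_pos hη0 hl0]
  have hl4 : l < 1 := by nlinarith
  have hL : 0 < Real.log (1 / l) := by
    apply Real.log_pos
    rw [lt_div_iff₀ hl0]; linarith
  have hE : 0 < Real.log (1 / e) := by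
    apply Real.log_pos
    rw [lt_div_iff₀ he0]; linarith
  set L := Real.log (1 / l) with hLdef
  have hlog : ∀ s, 0 < s → s < η * l → L / 2 ≤ Real.log (1 / s) := by
    intro s hs0 hs1
    have h1 : s ^ 2 ≤ l := by
      have : s ^ 2 ≤ (η * l) ^ 2 := by gcongr
      nlinarith
    have h2 := Real.log_le_log (by positivity) h1
    rw [Real.log_pow] at h2
    rw [hLdef, one_div, one_div, Real.log_inv, Real.log_inv]
    push_cast at h2
    linarith
  obtain ⟨iB, vB⟩ := auxB l e he0 (by linarith)
  have key : IntegrableOn (fun s : ℝ => |l - s|⁻¹) (Ioo (l + e) (η * l)) ∧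
      ∫ s in Ioo (l + e) (η * l), |l - s|⁻¹ ≤ Real.log (1 / e) := by
    rcases le_or_gt (l + e) (η * l) with h | h
    · obtain ⟨iA, vA⟩ := auxA l e (η * l) he0 h
      refine ⟨iA, ?_⟩
      rw [vA]
      apply Real.log_le_log (div_pos (by linarith) he0)
      gcongr
      linarith
    · rw [Ioo_eq_empty (by linarith)]
      simpa using hE.le
  obtain ⟨iA, vA⟩ := key
  have vB' : ∫ s in Ioo 0 (l - e), |l - s|⁻¹ ≤ Real.log (1 / e) := by
    rw [vB]
    apply Real.log_le_log (by positivity)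
    gcongr
  have hdisj : Disjoint (Ioo 0 (l - e)) (Ioo (l + e) (η * l)) := by
    rw [Set.disjoint_left]
    rintro x ⟨_, h1⟩ ⟨h2, _⟩
    linarith
  have hsub : ∀ s ∈ Ioo 0 (l - e) ∪ Ioo (l + e) (η * l), 0 < s ∧ s < η * l := by
    rintro s (⟨h1, h2⟩ | ⟨h1, h2⟩)
    · exact ⟨h1, by nlinarith⟩
    · exact ⟨by linarith, h2⟩
  have hm : MeasurableSet (Ioo 0 (l - e) ∪ Ioo (l + e) (η * l)) :=
    measurableSet_Ioo.union measurableSet_Ioo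
  have hK : 0 < (L / 2) ^ ((3 : ℝ) / 2) := by positivity
  calc _ ≤ ∫ s in Ioo 0 (l - e) ∪ Ioo (l + e) (η * l),
        ((L / 2) ^ ((3 : ℝ) / 2))⁻¹ * |l - s|⁻¹ := by
        apply integral_mono_of_nonneg
        · filter_upwards [ae_restrict_mem hm] with s hs
          obtain ⟨h1, h2⟩ := hsub s hs
          have := hlog s h1 h2
          have : 0 ≤ Real.log (1 / s) := by linarith
          simp only [Pi.zero_apply]
          positivity
        · exact (iB.union iA).const_mul _
        · filter_upwards [ae_restrict_mem hm] with s hs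
          obtain ⟨h1, h2⟩ := hsub s hs
          have := hlog s h1 h2
          rw [one_div, mul_inv, mul_comm]
          gcongr
    _ ≤ ((L / 2) ^ ((3 : ℝ) / 2))⁻¹ * (2 * Real.log (1 / e)) := by
        rw [integral_const_mul, setIntegral_union hdisj measurableSet_Ioo iB iA]
        gcongr
        linarith
    _ = _ := by
        rw [Real.div_rpow hL.le (by norm_num), inv_div]
        ring
end

section
/- Let 0 < s₀ < 1, C₁ > 0 and let g : (0, s₀) → ℝ be differentiable with |g'(s)| ≤ C₁ / (s (ln(1/s))^{1/2}) for all s ∈ (0, s₀). Then there exist C₂ > 0 and λ₀ ∈ (0, s₀/2) such that for every λ ∈ (0, λ₀) and every ε ∈ (0, λ/2), ∫_0^ε ( |g(λ+s) − g(λ−s)| / s ) · |g'(λ+s)| ds ≤ C₂ ε / (λ² ln(1/λ)). -/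
open MeasureTheory Real Set

/-- Let `0 < s₀ < 1`, `C₁ > 0` and let `g : (0,s₀) → ℝ` be differentiable with
`|g'(s)| ≤ C₁ / (s (ln(1/s))^{1/2})` for all `s ∈ (0,s₀)`. Then there exist `C₂ > 0` and
`λ₀ ∈ (0, s₀/2)` such that for every `λ ∈ (0, λ₀)` and every `ε ∈ (0, λ/2)`,
`∫_0^ε (|g(λ+s) - g(λ-s)| / s) |g'(λ+s)| ds ≤ C₂ ε / (λ² ln(1/λ))`. -/
theorem stmt16 (s₀ C₁ : ℝ) (hs₀ : 0 < s₀) (hs₀' : s₀ < 1) (hC₁ : 0 < C₁)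
    (g g' : ℝ → ℝ)
    (hg : ∀ s ∈ Set.Ioo (0 : ℝ) s₀, HasDerivAt g (g' s) s)
    (hg' : ∀ s ∈ Set.Ioo (0 : ℝ) s₀,
      |g' s| ≤ C₁ / (s * Real.sqrt (Real.log (1 / s)))) :
    ∃ C₂ > (0 : ℝ), ∃ lam₀ ∈ Set.Ioo (0 : ℝ) (s₀ / 2),
      ∀ lam ∈ Set.Ioo (0 : ℝ) lam₀, ∀ ε ∈ Set.Ioo (0 : ℝ) (lam / 2),
        ∫ s in Set.Ioo (0 : ℝ) ε,
            (|g (lam + s) - g (lam - s)| / s) * |g' (lam + s)|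
          ≤ C₂ * ε / (lam ^ 2 * Real.log (1 / lam)) := by
  refine ⟨16 * C₁ ^ 2, by positivity, s₀ / 4, ⟨by linarith, by linarith⟩, ?_⟩
  rintro lam ⟨hl0, hl1⟩ ε ⟨he0, he1⟩
  have hL : 0 < Real.log (1 / lam) := by
    apply Real.log_pos
    rw [lt_div_iff₀ hl0]; linarith
  set L := Real.log (1 / lam) with hLdef
  obtain ⟨M, hM⟩ : ∃ M, M = C₁ / (lam / 2 * Real.sqrt (L / 2)) := ⟨_, rfl⟩
  have hM0 : 0 ≤ M := by rw [hM]; positivity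
  have hM2 : M ^ 2 = 8 * C₁ ^ 2 / (lam ^ 2 * L) := by
    rw [hM, div_pow, mul_pow, Real.sq_sqrt (by positivity)]
    field_simp
    norm_num
  have hb : ∀ t ∈ Set.Icc (lam / 2) (3 * lam / 2), |g' t| ≤ M := by
    rintro t ⟨ht1, ht2⟩
    have ht0 : 0 < t := by linarith
    refine (hg' t ⟨ht0, by linarith⟩).trans ?_
    rw [hM]
    have h1 : L / 2 ≤ Real.log (1 / t) := by
      have h2 : Real.log (t ^ 2) ≤ Real.log lam :=
        Real.log_le_log (by positivity) (by nlinarith)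
      rw [Real.log_pow] at h2
      rw [hLdef, one_div, one_div, Real.log_inv, Real.log_inv]
      push_cast at h2
      linarith
    have h3 := Real.sqrt_le_sqrt h1
    have h4 : 0 < Real.sqrt (L / 2) := Real.sqrt_pos.2 (by positivity)
    gcongr
  have key : ∀ s ∈ Set.Ioo (0 : ℝ) ε,
      ‖(|g (lam + s) - g (lam - s)| / s) * |g' (lam + s)|‖ ≤ 2 * M ^ 2 := by
    rintro s ⟨h0, h1⟩
    have hmv := (convex_Icc (lam / 2) (3 * lam / 2)).norm_image_sub_le_of_norm_hasDerivWithin_le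
      (f := g) (f' := g') (C := M)
      (fun x hx => (hg x ⟨by linarith [hx.1], by linarith [hx.2]⟩).hasDerivWithinAt)
      (fun x hx => hb x hx)
      (x := lam - s) (y := lam + s) ⟨by linarith, by linarith⟩ ⟨by linarith, by linarith⟩
    rw [Real.norm_eq_abs, Real.norm_eq_abs, show lam + s - (lam - s) = 2 * s by ring,
      abs_of_pos (show 0 < 2 * s by linarith)] at hmv
    have hq : |g (lam + s) - g (lam - s)| / s ≤ 2 * M := by
      rw [div_le_iff₀ h0]; linarith
    rw [Real.norm_eq_abs, abs_of_nonneg (by positivity)]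
    calc _ ≤ (2 * M) * M :=
          mul_le_mul hq (hb _ ⟨by linarith, by linarith⟩) (abs_nonneg _) (by positivity)
      _ = _ := by ring
  have hfin := norm_setIntegral_le_of_norm_le_const (μ := volume) (by simp) key
  refine (le_abs_self _).trans (hfin.trans (le_of_eq ?_))
  rw [hM2, Real.volume_real_Ioo_of_le he0.le]
  ring
end

section
/- Let m > 0 and let ω : S¹ → ℝ be a continuous function with min ω =: ε₀ > 0, where S¹ is the unit circle in ℝ². Let V : ℝ² → [0, ∞) be measurable and suppose that sup_{|(x,y)| ≥ R} | (1 + x² + y²)^{m/2} V(x,y) − ω((x,y)/|(x,y)|) | → 0 as R → ∞. Then there exist λ₀ > 0 and constants c₋, c₊ > 0 such that for every λ ∈ (0, λ₀), c₋ λ^{−2/m} ≤ vol{(x,y) ∈ ℝ² : V(x,y) > λ} ≤ c₊ λ^{−2/m}. In particular the volume function satisfies N(λ, V) ≍ λ^{−2/m} as λ ↓ 0. -/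
open MeasureTheory Real Set


theorem aux_pow (m t W : ℝ) (ht : 0 ≤ t) (hW : W = t ^ 2) : W ^ (m / 2) = t ^ m := by
  subst hW
  rw [← Real.rpow_natCast t 2, ← Real.rpow_mul ht]
  congr 1
  push_cast
  ring

set_option maxHeartbeats 1000000 in
/-- Let `m > 0` and `ω : S¹ → ℝ` continuous with `min ω =: ε₀ > 0`. Let
`V : ℝ² → [0,∞)` be measurable with
`sup_{|(x,y)| ≥ R} |(1 + x² + y²)^{m/2} V(x,y) - ω((x,y)/|(x,y)|)| → 0` as `R → ∞`. Then
there are `λ₀ > 0` and `c₋, c₊ > 0` such that for every `λ ∈ (0, λ₀)`,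
`c₋ λ^{-2/m} ≤ vol{V > λ} ≤ c₊ λ^{-2/m}`; that is, `N(λ,V) ≍ λ^{-2/m}` as `λ ↓ 0`. -/
theorem stmt18 (m ε₀ : ℝ) (hm : 0 < m) (hε₀ : 0 < ε₀)
    (ω : ℝ × ℝ → ℝ)
    (hωc : ContinuousOn ω {p : ℝ × ℝ | p.1 ^ 2 + p.2 ^ 2 = 1})
    (hωmin : ∀ p : ℝ × ℝ, p.1 ^ 2 + p.2 ^ 2 = 1 → ε₀ ≤ ω p)
    (hωatt : ∃ p : ℝ × ℝ, p.1 ^ 2 + p.2 ^ 2 = 1 ∧ ω p = ε₀)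
    (V : ℝ × ℝ → ℝ) (hVm : Measurable V) (hV0 : ∀ p, 0 ≤ V p)
    (hlim : ∀ δ > (0 : ℝ), ∃ R > (0 : ℝ), ∀ p : ℝ × ℝ,
      R ≤ Real.sqrt (p.1 ^ 2 + p.2 ^ 2) →
      |(1 + p.1 ^ 2 + p.2 ^ 2) ^ (m / 2) * V p -
          ω (p.1 / Real.sqrt (p.1 ^ 2 + p.2 ^ 2), p.2 / Real.sqrt (p.1 ^ 2 + p.2 ^ 2))|
        ≤ δ) :
    ∃ lam₀ > (0 : ℝ), ∃ cm > (0 : ℝ), ∃ cp > (0 : ℝ),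
      ∀ lam ∈ Set.Ioo (0 : ℝ) lam₀,
        ENNReal.ofReal (cm * lam ^ (-(2 / m))) ≤ volume {p : ℝ × ℝ | lam < V p} ∧
        volume {p : ℝ × ℝ | lam < V p} ≤ ENNReal.ofReal (cp * lam ^ (-(2 / m))) := by
  obtain ⟨R, hR, hlimR⟩ := hlim (ε₀ / 2) (by positivity)
  have hcomp : IsCompact {p : ℝ × ℝ | p.1 ^ 2 + p.2 ^ 2 = 1} := by
    apply IsCompact.of_isClosed_subset (isCompact_Icc (a := ((-1 : ℝ), (-1 : ℝ))) (b := (1, 1)))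
    · exact isClosed_eq (by fun_prop) (by fun_prop)
    · rintro ⟨x, y⟩ h
      simp only [Set.mem_ofPred_eq] at h
      simp only [Set.mem_Icc, Prod.mk_le_mk]
      refine ⟨⟨?_, ?_⟩, ?_, ?_⟩ <;> nlinarith [sq_nonneg x, sq_nonneg y]
  obtain ⟨M, hM⟩ := hcomp.bddAbove_image hωc
  have hM' : ∀ p : ℝ × ℝ, p.1 ^ 2 + p.2 ^ 2 = 1 → ω p ≤ M := fun p hp => hM ⟨p, hp, rfl⟩
  have hMpos : 0 < M := by
    obtain ⟨p, hp, h⟩ := hωatt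
    have := hM' p hp
    linarith
  obtain ⟨a, ha⟩ : ∃ a, a = ε₀ / 2 := ⟨_, rfl⟩
  obtain ⟨K, hK⟩ : ∃ K, K = M + ε₀ / 2 := ⟨_, rfl⟩
  have ha0 : 0 < a := by rw [ha]; positivity
  have hK0 : 0 < K := by rw [hK]; positivity
  have key : ∀ p : ℝ × ℝ, R ^ 2 ≤ p.1 ^ 2 + p.2 ^ 2 →
      a ≤ (1 + p.1 ^ 2 + p.2 ^ 2) ^ (m / 2) * V p ∧
      (1 + p.1 ^ 2 + p.2 ^ 2) ^ (m / 2) * V p ≤ K := by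
    intro p hp
    have hpos : 0 < p.1 ^ 2 + p.2 ^ 2 := lt_of_lt_of_le (by positivity) hp
    have h1 := abs_le.1 (hlimR p (Real.le_sqrt_of_sq_le hp))
    have h2 : (p.1 / Real.sqrt (p.1 ^ 2 + p.2 ^ 2)) ^ 2
        + (p.2 / Real.sqrt (p.1 ^ 2 + p.2 ^ 2)) ^ 2 = 1 := by
      rw [div_pow, div_pow, Real.sq_sqrt hpos.le, ← add_div, div_self hpos.ne']
    have h3 := hωmin (_, _) h2
    have h4 := hM' (_, _) h2
    constructor <;> linarith [h1.1, h1.2]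
  obtain ⟨b, hb⟩ : ∃ b, b = a ^ (1 / m) := ⟨_, rfl⟩
  obtain ⟨k, hk⟩ : ∃ k, k = K ^ (1 / m) := ⟨_, rfl⟩
  have hb0 : 0 < b := by rw [hb]; positivity
  have hk0 : 0 < k := by rw [hk]; positivity
  have hbm : b ^ m = a := by
    rw [hb, ← Real.rpow_mul ha0.le, one_div_mul_cancel hm.ne', Real.rpow_one]
  have hkm : k ^ m = K := by
    rw [hk, ← Real.rpow_mul hK0.le, one_div_mul_cancel hm.ne', Real.rpow_one]
  obtain ⟨S, hS⟩ : ∃ S, S = 1 + 2 / b + 3 * R / b := ⟨_, rfl⟩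
  have hS0 : 0 < S := by rw [hS]; positivity
  refine ⟨S ^ (-m), by positivity, b ^ 2 / 36, by positivity, 4 * (R + k) ^ 2, by positivity, ?_⟩
  rintro lam ⟨hl0, hl⟩
  obtain ⟨s, hs⟩ : ∃ s, s = lam ^ (-(1 / m)) := ⟨_, rfl⟩
  have hs0 : 0 < s := by rw [hs]; positivity
  have hs2 : lam ^ (-(2 / m)) = s ^ 2 := by
    rw [hs, ← Real.rpow_natCast _ 2, ← Real.rpow_mul hl0.le]
    congr 1
    push_cast
    ring
  have hsm : s ^ m * lam = 1 := by
    rw [hs, ← Real.rpow_mul hl0.le, neg_mul, one_div_mul_cancel hm.ne', Real.rpow_neg_one,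
      inv_mul_cancel₀ hl0.ne']
  have hSs : S < s := by
    by_contra hcon
    push Not at hcon
    have h1 := Real.rpow_le_rpow hs0.le hcon hm.le
    rw [Real.rpow_neg hS0.le] at hl
    have h2 : S ^ m * lam < 1 := by
      have h3 : 0 < S ^ m := by positivity
      calc S ^ m * lam < S ^ m * (S ^ m)⁻¹ := by gcongr
        _ = 1 := mul_inv_cancel₀ h3.ne'
    nlinarith
  have hs1 : 1 < s := by
    have h1 : 0 < 2 / b := by positivity
    have h2 : 0 < 3 * R / b := by positivity
    linarith
  have hsb : b + 2 + 3 * R < b * s := by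
    have : b * S = b + 2 + 3 * R := by rw [hS]; field_simp
    nlinarith
  rw [hs2]
  constructor
  · have hsub : Set.Icc (b * s / 3) (b * s / 2) ×ˢ Set.Icc (b * s / 3) (b * s / 2)
        ⊆ {p : ℝ × ℝ | lam < V p} := by
      rintro ⟨x, y⟩ ⟨⟨hx1, hx2⟩, hy1, hy2⟩
      simp only at hx1 hx2 hy1 hy2
      simp only [Set.mem_ofPred_eq]
      have hx : R ≤ x := by linarith
      have hx3 : x ^ 2 ≤ (b * s / 2) ^ 2 := by
        apply pow_le_pow_left₀ _ hx2; linarith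
      have hy3 : y ^ 2 ≤ (b * s / 2) ^ 2 := by
        apply pow_le_pow_left₀ _ hy2; linarith
      have hx4 : R ^ 2 ≤ x ^ 2 := pow_le_pow_left₀ hR.le hx 2
      have h1 := (key (x, y) (by simp only; nlinarith [sq_nonneg y])).1
      simp only at h1
      have hbs : 0 < b * s := by positivity
      have h2 : 1 + x ^ 2 + y ^ 2 < (b * s) ^ 2 := by nlinarith
      have h3 : (1 + x ^ 2 + y ^ 2) ^ (m / 2) < ((b * s) ^ 2) ^ (m / 2) :=
        Real.rpow_lt_rpow (by positivity) h2 (by positivity)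
      rw [aux_pow m (b * s) _ hbs.le rfl, Real.mul_rpow hb0.le hs0.le, hbm] at h3
      by_contra hcon
      push Not at hcon
      have h4 : 0 < (1 + x ^ 2 + y ^ 2) ^ (m / 2) := by positivity
      have h5 : (1 + x ^ 2 + y ^ 2) ^ (m / 2) * V (x, y)
        ≤ (1 + x ^ 2 + y ^ 2) ^ (m / 2) * lam := by gcongr
      have h6 : (1 + x ^ 2 + y ^ 2) ^ (m / 2) * lam < a * s ^ m * lam := by gcongr
      rw [mul_assoc, hsm] at h6
      linarith
    refine le_trans (le_of_eq ?_) (measure_mono hsub)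
    rw [Measure.volume_eq_prod, Measure.prod_prod, Real.volume_Icc, ← ENNReal.ofReal_mul]
    · congr 1; ring
    · have : 0 < b * s := by positivity
      linarith
  · have hRk : R + k * s ≤ (R + k) * s := by nlinarith
    have hks : 0 < k * s := by positivity
    have hbd : ∀ x y : ℝ, lam < V (x, y) → x ^ 2 + y ^ 2 ≤ ((R + k) * s) ^ 2 := by
      intro x y hV
      by_contra hcon
      push Not at hcon
      have h7 : (R + k * s) ^ 2 ≤ ((R + k) * s) ^ 2 := pow_le_pow_left₀ (by positivity) hRk 2
      have hRks : 0 < R * (k * s) := by positivity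
      have h8 : (R + k * s) ^ 2 = R ^ 2 + 2 * (R * (k * s)) + (k * s) ^ 2 := by ring
      have h9 := sq_nonneg R
      have h10 := sq_nonneg (k * s)
      have h11 : R ^ 2 ≤ x ^ 2 + y ^ 2 := by linarith
      have h1 := (key (x, y) h11).2
      simp only at h1
      have h2 : (k * s) ^ 2 ≤ 1 + x ^ 2 + y ^ 2 := by linarith
      have h3 : ((k * s) ^ 2) ^ (m / 2) ≤ (1 + x ^ 2 + y ^ 2) ^ (m / 2) :=
        Real.rpow_le_rpow (by positivity) h2 (by positivity)
      rw [aux_pow m (k * s) _ hks.le rfl, Real.mul_rpow hk0.le hs0.le, hkm] at h3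
      have h4 : 0 < (1 + x ^ 2 + y ^ 2) ^ (m / 2) := by positivity
      have h5 : (1 + x ^ 2 + y ^ 2) ^ (m / 2) * lam
        < (1 + x ^ 2 + y ^ 2) ^ (m / 2) * V (x, y) := by gcongr
      have h6 : K * s ^ m * lam ≤ (1 + x ^ 2 + y ^ 2) ^ (m / 2) * lam := by gcongr
      rw [mul_assoc, hsm] at h6
      linarith
    have hC : 0 ≤ (R + k) * s := by positivity
    have hsub : {p : ℝ × ℝ | lam < V p} ⊆
        Set.Icc (-((R + k) * s)) ((R + k) * s) ×ˢ Set.Icc (-((R + k) * s)) ((R + k) * s) := by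
      rintro ⟨x, y⟩ h
      have h1 := hbd x y h
      exact ⟨abs_le.1 (abs_le_of_sq_le_sq (by linarith [sq_nonneg y]) hC),
        abs_le.1 (abs_le_of_sq_le_sq (by linarith [sq_nonneg x]) hC)⟩
    refine le_trans (measure_mono hsub) (le_of_eq ?_)
    rw [Measure.volume_eq_prod, Measure.prod_prod, Real.volume_Icc, ← ENNReal.ofReal_mul]
    · congr 1; ring
    · linarith
end

section
/- Let b > 0, let j ≥ 1 be an integer and let m > 2. Then the function F : ℝ → [0, ∞) defined by F(k) := ∫_ℝ (1 + x²)^{−m/4} ψ_{j,∞}(x;k)² dx is integrable on ℝ, i.e. ∫_ℝ F(k) dk < ∞. -/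
open MeasureTheory Real Set

theorem aux_iter (q : ℕ) : ∃ P : Polynomial ℝ,
    iteratedDeriv q (fun t : ℝ => Real.exp (-t ^ 2)) = fun x => P.eval x * Real.exp (-x ^ 2) := by
  induction q with
  | zero => exact ⟨1, by simp⟩
  | succ n ih =>
    obtain ⟨P, hP⟩ := ih
    refine ⟨P.derivative - 2 * Polynomial.X * P, ?_⟩
    rw [iteratedDeriv_succ, hP]
    ext x
    have h1 : HasDerivAt (fun x : ℝ => -x ^ 2) (-(2 * x)) x := by
      have h0 := (hasDerivAt_pow 2 x).fun_neg
      norm_num at h0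
      exact h0
    have h2 := (P.hasDerivAt x).mul h1.exp
    refine h2.deriv.trans ?_
    simp
    ring

theorem aux_int_s19 (P : Polynomial ℝ) :
    Integrable (fun x : ℝ => P.eval x * Real.exp (-x ^ 2)) := by
  induction P using Polynomial.induction_on' with
  | add p q hp hq =>
    refine (hp.add hq).congr (Filter.Eventually.of_forall fun x => ?_)
    simp [add_mul]
  | monomial n a =>
    have h := integrable_rpow_mul_exp_neg_mul_sq (b := 1) one_pos (s := (n : ℝ))
      (by have : (0 : ℝ) ≤ n := n.cast_nonneg
          linarith)
    refine (h.const_mul a).congr (Filter.Eventually.of_forall fun x => ?_)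
    simp [mul_assoc]

theorem aux_phi (j : ℕ) : Integrable (fun x : ℝ => (phiF j x) ^ 2) := by
  obtain ⟨P, hP⟩ := aux_iter (j - 1)
  refine ((aux_int_s19 (P ^ 2)).const_mul
    (((Real.sqrt (Real.sqrt Real.pi * (Nat.factorial (j - 1)) * 2 ^ (j - 1)))⁻¹) ^ 2)).congr
    (Filter.Eventually.of_forall fun x => ?_)
  have e1 : Real.exp (x ^ 2) * Real.exp (-x ^ 2) = 1 := by
    rw [← Real.exp_add]; simp
  have e2 : Real.exp (-x ^ 2 / 2) ^ 2 = Real.exp (-x ^ 2) := by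
    rw [← Real.exp_nat_mul]; congr 1; push_cast; ring
  have e3 : ((-1 : ℝ) ^ (j - 1)) ^ 2 = 1 := by
    rw [← pow_mul, mul_comm, pow_mul]; simp
  simp only [phiF, hermiteP, hP, Polynomial.eval_pow]
  generalize (Real.sqrt (Real.sqrt Real.pi * (Nat.factorial (j - 1)) * 2 ^ (j - 1)))⁻¹ = c
  calc c ^ 2 * (P.eval x ^ 2 * Real.exp (-x ^ 2))
      = c ^ 2 * (((-1 : ℝ) ^ (j - 1)) ^ 2 * (Real.exp (x ^ 2) * Real.exp (-x ^ 2)) ^ 2 *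
          P.eval x ^ 2 * Real.exp (-x ^ 2 / 2) ^ 2) := by rw [e1, e2, e3]; ring
    _ = _ := by ring

/-- Let `b > 0`, `j ≥ 1` an integer and `m > 2`. Then the function
`F(k) := ∫_ℝ (1 + x²)^{-m/4} ψ_{j,∞}(x;k)² dx` is integrable on `ℝ`. -/
theorem stmt19 (b : ℝ) (hb : 0 < b) (j : ℕ) (hj : 1 ≤ j) (m : ℝ) (hm : 2 < m) :
    Integrable (fun k : ℝ =>
      ∫ x : ℝ, (1 + x ^ 2) ^ (-(m / 4)) * (psiInf b j x k) ^ 2) := by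
  have hs : Real.sqrt b ≠ 0 := (Real.sqrt_pos.mpr hb).ne'
  have hf : Integrable (fun x : ℝ => (1 + x ^ 2) ^ (-(m / 4))) := by
    have h := integrable_rpow_neg_one_add_norm_sq (E := ℝ) (μ := volume) (r := m / 2)
      (by simp; linarith)
    refine h.congr (Filter.Eventually.of_forall fun x => ?_)
    simp only [Real.norm_eq_abs, sq_abs]
    congr 1; ring
  have hg : Integrable (fun t : ℝ => (b ^ ((1 : ℝ) / 4) * phiF j (-Real.sqrt b * t)) ^ 2) := by
    have h := ((aux_phi j).comp_mul_left' (neg_ne_zero.mpr hs)).const_mul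
      ((b ^ ((1 : ℝ) / 4)) ^ 2)
    refine h.congr (Filter.Eventually.of_forall fun x => ?_)
    simp only [mul_pow]
  have hc := (hf.convolution_integrand (ContinuousLinearMap.mul ℝ ℝ) hg).integral_prod_left
  refine (hc.comp_div hb.ne').congr (Filter.Eventually.of_forall fun k => ?_)
  simp only [ContinuousLinearMap.mul_apply', psiInf]
  congr 1
  ext x
  have : -Real.sqrt b * (k / b - x) = Real.sqrt b * x - k / Real.sqrt b := by
    have hb2 : b = Real.sqrt b * Real.sqrt b := (Real.mul_self_sqrt hb.le).symm
    have : k / b = k / Real.sqrt b / Real.sqrt b := by rw [div_div, ← hb2]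
    rw [this]; field_simp; ring
  rw [this]
end
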